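/- Belk–Bleak–Matucci: Every hyperbolic group embeds in the rational group ℛ; that is, if G is a hyperbolic group then there exists an injective group homomorphism from G into the group ℛ of rational homeomorphisms of the Cantor space 𝔠. -/

import Mathlib

/-- Concatenation of a finite word with an infinite sequence. -/
def wordAppend {A : Type*} (α : List A) (x : ℕ → A) : ℕ → A :=
  fun n => if h : n < α.length then α.get ⟨n, h⟩ else x (n - α.length)

/-- The cone determined by a finite word: all sequences having it as a prefix. -/
def cone {A : Type*} (α : List A) : Set (ℕ → A) := Set.range (wordAppend α)

/-- `g` is the local action of the homeomorphism `f` at the word `α`: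
there is a word `β` with `f (α ⌢ x) = β ⌢ (g x)` for all `x`, and `β` is the longest
common prefix of the image of the cone `C_α` (witnessed by two image points that
differ in the coordinate immediately after `β`). -/
def IsLocalAction {A : Type*} [TopologicalSpace A] (f : (ℕ → A) ≃ₜ (ℕ → A)) (α : List A)
    (g : (ℕ → A) → (ℕ → A)) : Prop :=
  ∃ β : List A, (∀ x, f (wordAppend α x) = wordAppend β (g x)) ∧ ∃ x y, g x 0 ≠ g y 0

/-- A homeomorphism of a Cantor space of sequences is rational if it has only
finitely many distinct local actions. -/
def IsRational {A : Type*} [TopologicalSpace A] (f : (ℕ → A) ≃ₜ (ℕ → A)) : Prop :=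
  {g | ∃ α, IsLocalAction f α g}.Finite

/-- The group of self-homeomorphisms of a topological space, under composition. -/
instance homeoGroup {X : Type*} [TopologicalSpace X] : Group (X ≃ₜ X) where
  mul f g := g.trans f
  one := Homeomorph.refl X
  inv := Homeomorph.symm
  mul_assoc _ _ _ := rfl
  one_mul _ := Homeomorph.ext fun _ => rfl
  mul_one _ := Homeomorph.ext fun _ => rfl
  inv_mul_cancel := Homeomorph.self_trans_symm

/-- The word length of `g` with respect to a generating set `S`: the least `k` such
that `g` is a product of `k` elements of `S ∪ S⁻¹`. -/
noncomputable def wordNorm {G : Type*} [Group G] (S : Set G) (g : G) : ℕ :=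
  sInf {k | ∃ l : List G, l.length = k ∧ (∀ x ∈ l, x ∈ S ∨ x⁻¹ ∈ S) ∧ l.prod = g}

/-- The word metric on `G` with respect to `S`. -/
noncomputable def wordDist {G : Type*} [Group G] (S : Set G) (g h : G) : ℕ :=
  wordNorm S (g⁻¹ * h)

/-- The Gromov product `(x|y)_w = ½(d(x,w) + d(y,w) − d(x,y))` with respect to the
word metric for `S`. -/
noncomputable def gromovProd {G : Type*} [Group G] (S : Set G) (w x y : G) : ℝ :=
  ((wordDist S x w : ℝ) + (wordDist S y w : ℝ) - (wordDist S x y : ℝ)) / 2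

/-- A group is hyperbolic if it has a finite generating set `S` and a `δ ≥ 0` such
that `(x|y)_w ≥ min((x|z)_w, (z|y)_w) − δ` for all `w, x, y, z`. -/
def IsHyperbolic (G : Type*) [Group G] : Prop :=
  ∃ S : Finset G, Subgroup.closure (S : Set G) = ⊤ ∧
    ∃ δ : ℝ, 0 ≤ δ ∧ ∀ w x y z : G,
      min (gromovProd (S : Set G) w x z) (gromovProd (S : Set G) w z y) - δ ≤
        gromovProd (S : Set G) w x y

/-!
Fix a word metric `d` on `G`. To `k : G` and a vertex `p` attach the *germ* of the function `d · k`
on a ball of radius about `3δ` around `p`; there are finitely many germs up to translation. The germ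
of `k` at `p` determines a next vertex of a geodesic from `p` to `k`, so that it yields a canonical
geodesic from `1` to `k`, and `k` is encoded by the sequence of germs along it, its *trace*. The
traces are the branches of a tree, and each of them is isolated. By hyperbolicity

* a bounded number of consecutive germs determines the earlier ones, so that the tree of traces has
  finitely many types of subtrees, isomorphisms between them being left multiplications;
* left multiplication by `g` maps subtrees into subtrees with a bounded delay, and hence is computed
  by a transducer with finitely many states.

After encoding the letters in binary and suppressing the vertices that do not branch, the tree is
a full binary tree in which every `k` is a leaf. Hang a copy of the Cantor space below every leaf;
`G` permutes these copies. Their union is dense in `ℕ → Bool`, the action extends continuously, and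
the states of the transducer bound the number of local actions.
-/

open Set Filter Topology Function PiNat

section Words

variable {A : Type*}

lemma mem_cylinder_add_iff {x y : ℕ → A} {n m : ℕ} :
    y ∈ cylinder x (n + m) ↔ y ∈ cylinder x n ∧ ∀ i < m, y (n + i) = x (n + i) := by
  refine ⟨fun h => ⟨fun i hi => h i (by lia), fun i hi => h (n + i) (by lia)⟩, fun h i hi => ?_⟩
  rcases lt_or_ge i n with hin | hin
  · exact h.1 i hin
  · obtain ⟨j, rfl⟩ := Nat.exists_eq_add_of_le hin
    exact h.2 j (by lia)

lemma mem_cylinder_succ_iff {x y : ℕ → A} {n : ℕ} :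
    y ∈ cylinder x (n + 1) ↔ y ∈ cylinder x n ∧ y n = x n :=
  mem_cylinder_add_iff.trans (and_congr_right' (by simp))

lemma wordAppend_apply_of_lt (α : List A) (x : ℕ → A) {i : ℕ} (h : i < α.length) :
    wordAppend α x i = α[i] := by
  simp [wordAppend, h]

lemma wordAppend_length_add (α : List A) (x : ℕ → A) (i : ℕ) :
    wordAppend α x (α.length + i) = x i := by
  simp [wordAppend]

lemma wordAppend_append (α β : List A) (x : ℕ → A) :
    wordAppend (α ++ β) x = wordAppend α (wordAppend β x) := by
  funext i
  simp only [wordAppend, List.length_append, List.get_eq_getElem]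
  grind

lemma leftInverse_wordAppend (α : List A) :
    LeftInverse (fun (y : ℕ → A) i => y (α.length + i)) (wordAppend α) :=
  fun x => funext (wordAppend_length_add α x)

lemma wordAppend_injective (α : List A) : Injective (wordAppend α) :=
  (leftInverse_wordAppend α).injective

lemma mem_cone_iff {α : List A} {y : ℕ → A} :
    y ∈ cone α ↔ ∀ (i : ℕ) (h : i < α.length), y i = α[i] := by
  constructor
  · rintro ⟨x, rfl⟩ i h
    exact wordAppend_apply_of_lt α x h
  · intro h
    refine ⟨fun i => y (α.length + i), funext fun i => ?_⟩
    rcases lt_or_ge i α.length with hi | hi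
    · rw [wordAppend_apply_of_lt _ _ hi, h i hi]
    · obtain ⟨j, rfl⟩ := Nat.exists_eq_add_of_le hi
      exact wordAppend_length_add _ _ _

lemma cone_append_subset (α β : List A) : cone (α ++ β) ⊆ cone α := by
  rintro _ ⟨x, rfl⟩
  exact ⟨wordAppend β x, (wordAppend_append α β x).symm⟩

lemma cone_eq_cylinder {α : List A} {x : ℕ → A} (hx : x ∈ cone α) :
    cone α = cylinder x α.length := by
  ext y
  rw [mem_cone_iff] at hx ⊢
  exact forall₂_congr fun i hi => by rw [hx i hi]

lemma cylinder_eq_cone (x : ℕ → A) (n : ℕ) : cylinder x n = cone ((List.range n).map x) := by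
  ext y
  simp [mem_cone_iff]

lemma eq_append_of_wordAppend_eq {α β : List A} {x y : ℕ → A}
    (h : wordAppend α x = wordAppend β y) (hlen : α.length ≤ β.length) : ∃ γ, β = α ++ γ := by
  suffices hpre : α <+: β by
    obtain ⟨γ, hγ⟩ := hpre
    exact ⟨γ, hγ.symm⟩
  refine List.prefix_iff_getElem.2 ⟨hlen, fun i hi => ?_⟩
  rw [← wordAppend_apply_of_lt α x hi, h, wordAppend_apply_of_lt]

end Words

section LocalActions

variable {A D : Type*}

lemma length_le_of_wordAppend_eq {β γ : List A} {c g : D → ℕ → A}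
    (h : ∀ x, wordAppend β (c x) = wordAppend γ (g x)) (hg : ∃ x y, g x 0 ≠ g y 0) :
    β.length ≤ γ.length := by
  by_contra! hlt
  obtain ⟨x, y, hxy⟩ := hg
  have apply_zero (z : D) : g z 0 = β[γ.length] := by
    rw [← wordAppend_length_add γ (g z) 0, ← h z]
    exact wordAppend_apply_of_lt _ _ hlt
  exact hxy ((apply_zero x).trans (apply_zero y).symm)

lemma exists_eq_wordAppend {β γ : List A} {c g : D → ℕ → A}
    (h : ∀ x, wordAppend β (c x) = wordAppend γ (g x)) (hg : ∃ x y, g x 0 ≠ g y 0) :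
    ∃ δ : List A, ∀ x, c x = wordAppend δ (g x) := by
  obtain ⟨x₀, -⟩ := id hg
  obtain ⟨δ, rfl⟩ := eq_append_of_wordAppend_eq (h x₀) (length_le_of_wordAppend_eq h hg)
  exact ⟨δ, fun x => wordAppend_injective β ((h x).trans (wordAppend_append β δ (g x)))⟩

lemma eq_of_wordAppend_eq {β γ : List A} {g₁ g₂ : D → ℕ → A}
    (h : ∀ x, wordAppend β (g₁ x) = wordAppend γ (g₂ x))
    (h₁ : ∃ x y, g₁ x 0 ≠ g₁ y 0) (h₂ : ∃ x y, g₂ x 0 ≠ g₂ y 0) : g₁ = g₂ := by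
  have hlen : β.length = γ.length :=
    (length_le_of_wordAppend_eq h h₂).antisymm
      (length_le_of_wordAppend_eq (fun x => (h x).symm) h₁)
  funext x i
  rw [← wordAppend_length_add β (g₁ x), h x, hlen, wordAppend_length_add]

lemma IsLocalAction.eq_of_factor [TopologicalSpace A] {f : (ℕ → A) ≃ₜ (ℕ → A)}
    {α α' β β' : List A} {c g g' : (ℕ → A) → (ℕ → A)}
    (hg : IsLocalAction f α g) (hg' : IsLocalAction f α' g')
    (h : ∀ x, f (wordAppend α x) = wordAppend β (c x))
    (h' : ∀ x, f (wordAppend α' x) = wordAppend β' (c x)) : g = g' := by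
  obtain ⟨γ, hγ, hne⟩ := hg
  obtain ⟨γ', hγ', hne'⟩ := hg'
  obtain ⟨δ, hδ⟩ := exists_eq_wordAppend (fun x => (h x).symm.trans (hγ x)) hne
  obtain ⟨δ', hδ'⟩ := exists_eq_wordAppend (fun x => (h' x).symm.trans (hγ' x)) hne'
  exact eq_of_wordAppend_eq (fun x => (hδ x).symm.trans (hδ' x)) hne hne'

end LocalActions

section Topology

lemma exists_continuous_extension {D Y Z : Type*} [TopologicalSpace Y] [TopologicalSpace Z]
    [T3Space Z] {ι : D → Y} (hι : DenseRange ι) (f : D → Z)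
    (hf : ∀ y, ∃ z, Tendsto f (comap ι (𝓝 y)) (𝓝 z)) :
    ∃ F : Y → Z, Continuous F ∧ ∀ d, F (ι d) = f d := by
  let _ : TopologicalSpace D := .induced ι inferInstance
  have hdense : IsDenseInducing ι := ⟨⟨rfl⟩, hι⟩
  refine ⟨hdense.extend f, hdense.continuous_extend hf, fun d => ?_⟩
  obtain ⟨z, hz⟩ := hf (ι d)
  exact hdense.extend_eq_at' z (by rwa [hdense.nhds_eq_comap])

lemma exists_monoidHom_of_continuous_extensions {G X U Y : Type*} [Group G] [MulAction G X]
    [TopologicalSpace Y] [T2Space Y] {ι : X → U → Y} (hι : DenseRange (uncurry ι))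
    (hext : ∀ g : G, ∃ F : Y → Y, Continuous F ∧ ∀ k u, F (ι k u) = ι (g • k) u) :
    ∃ φ : G →* (Y ≃ₜ Y), ∀ g k u, φ g (ι k u) = ι (g • k) u := by
  choose F hF_cont hF using hext
  have hF_mul (g h : G) : F (g * h) = F g ∘ F h :=
    (hF_cont _).ext_on hι ((hF_cont g).comp (hF_cont h)) <| by
      rintro _ ⟨⟨k, u⟩, rfl⟩
      simp only [uncurry_apply_pair, comp_apply, hF, mul_smul]
  have hF_one : F 1 = id :=
    (hF_cont 1).ext_on hι continuous_id <| by
      rintro _ ⟨⟨k, u⟩, rfl⟩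
      simp only [uncurry_apply_pair, hF, one_smul, id_eq]
  let φ (g : G) : Y ≃ₜ Y :=
    { toFun := F g
      invFun := F g⁻¹
      left_inv := congrFun (by rw [← hF_mul, inv_mul_cancel, hF_one] : F g⁻¹ ∘ F g = id)
      right_inv := congrFun (by rw [← hF_mul, mul_inv_cancel, hF_one] : F g ∘ F g⁻¹ = id)
      continuous_toFun := hF_cont g
      continuous_invFun := hF_cont g⁻¹ }
  exact ⟨{ toFun := φ
           map_one' := Homeomorph.ext (congrFun hF_one)
           map_mul' := fun g h => Homeomorph.ext (congrFun (hF_mul g h)) }, hF⟩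

variable {A : Type*} [TopologicalSpace A]

lemma continuous_wordAppend (α : List A) : Continuous (wordAppend α) := by
  refine continuous_pi fun i => ?_
  unfold wordAppend
  split_ifs <;> fun_prop

lemma exists_tendsto_of_eventually_mem_cylinder {D : Type*} {l : Filter D} [l.NeBot]
    {f : D → ℕ → A}
    (hf : ∀ m, ∃ s ∈ l, ∀ d ∈ s, ∀ d' ∈ s, f d ∈ cylinder (f d') m) :
    ∃ z, Tendsto f l (𝓝 z) := by
  choose s hs hfs using hf
  choose d hd using fun m => Filter.nonempty_of_mem (hs m)
  refine ⟨fun m => f (d (m + 1)) m, tendsto_pi_nhds.2 fun m => ?_⟩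
  refine tendsto_const_nhds.congr' ?_
  filter_upwards [hs (m + 1)] with e he
  exact hfs (m + 1) _ (hd _) _ he m m.lt_succ_self

variable [DiscreteTopology A]

lemma isOpen_cone (α : List A) : IsOpen (cone α) := by
  refine isOpen_iff_mem_nhds.2 fun x hx => ?_
  rw [cone_eq_cylinder hx]
  exact (isOpen_cylinder _ x _).mem_nhds (self_mem_cylinder x _)

lemma isOpenEmbedding_wordAppend (α : List A) : IsOpenEmbedding (wordAppend α) where
  toIsEmbedding := (leftInverse_wordAppend α).isEmbedding (by fun_prop) (continuous_wordAppend α)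
  isOpen_range := isOpen_cone α

lemma dense_of_inter_cone_nonempty {s : Set (ℕ → A)} (hs : ∀ α, (cone α ∩ s).Nonempty) :
    Dense s := by
  refine (isTopologicalBasis_cylinders fun _ => A).dense_iff.2 ?_
  rintro _ ⟨x, n, rfl⟩ -
  rw [cylinder_eq_cone]
  exact hs _

end Topology

section Compression

variable {X : Type*} {r : X → ℕ → Bool} {k l : X} {s t : ℕ}

/-- Identify `k : X` with the branch `r k` of a binary tree. The vertex `(r k) 0 … (r k) (t - 1)`
of the tree formed by all these branches is *branching* if it has two children. -/
def IsBranching (r : X → ℕ → Bool) (k : X) (t : ℕ) : Prop :=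
  ∀ b, ∃ l, r l ∈ cylinder (r k) t ∧ r l t = b

lemma isBranching_congr (h : r l ∈ cylinder (r k) t) : IsBranching r l t ↔ IsBranching r k t := by
  simp only [IsBranching, mem_cylinder_iff_eq.1 h]

lemma isBranching_of_apply_ne (h : r l ∈ cylinder (r k) t) (hne : r l t ≠ r k t) :
    IsBranching r k t := by
  intro b
  by_cases hb : r k t = b
  · exact ⟨k, self_mem_cylinder _ _, hb⟩
  · exact ⟨l, h, by cases b <;> simp_all⟩

open Classical in
/-- The first `t` letters of the branch `r k`, keeping only those read at branching vertices:
suppressing the other vertices turns the tree of all branches into a full binary tree. -/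
noncomputable def compress (r : X → ℕ → Bool) (k : X) : ℕ → List Bool
  | 0 => []
  | t + 1 => compress r k t ++ if IsBranching r k t then [r k t] else []

lemma compress_succ_of_isBranching (h : IsBranching r k t) :
    compress r k (t + 1) = compress r k t ++ [r k t] := by
  rw [compress, if_pos h]

lemma compress_succ_of_not_isBranching (h : ¬IsBranching r k t) :
    compress r k (t + 1) = compress r k t := by
  rw [compress, if_neg h, List.append_nil]

lemma compress_congr (h : r l ∈ cylinder (r k) t) : compress r l t = compress r k t := by
  induction t with
  | zero => rfl
  | succ t ih =>
    obtain ⟨hag, hlast⟩ := mem_cylinder_succ_iff.1 h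
    rw [compress, compress, ih hag, hlast, isBranching_congr hag]

lemma compress_prefix (k : X) (h : s ≤ t) : compress r k s <+: compress r k t := by
  induction t, h using Nat.le_induction with
  | base => exact List.prefix_rfl
  | succ t _ ih => exact ih.trans (List.prefix_append _ _)

lemma length_compress_le (k : X) (t : ℕ) : (compress r k t).length ≤ t := by
  induction t with
  | zero => rfl
  | succ t ih =>
    rw [compress, List.length_append]
    split_ifs <;> simp only [List.length_singleton, List.length_nil] <;> lia

/-- Every branch `r k` is isolated, that is, it is determined by one of its finite prefixes. -/
def IsSeparated {A : Type*} (r : X → ℕ → A) : Prop :=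
  ∀ k, ∃ T, ∀ l, r l ∈ cylinder (r k) T → l = k

/-- The length of the shortest prefix of `r k` determining `k` (junk value `0` if there is none). -/
noncomputable def separationTime (r : X → ℕ → Bool) (k : X) : ℕ :=
  sInf {T | ∀ l, r l ∈ cylinder (r k) T → l = k}

/-- The compressed word of the whole branch `r k`, which is a leaf of the compressed tree. -/
noncomputable def code (r : X → ℕ → Bool) (k : X) : List Bool :=
  compress r k (separationTime r k)

/-- The point `u` of the copy of the Cantor space hung below the leaf `k`. -/
noncomputable def leafPoint (r : X → ℕ → Bool) (k : X) (u : ℕ → Bool) : ℕ → Bool :=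
  wordAppend (code r k) u

lemma IsSeparated.eq_of_mem_cylinder (hr : IsSeparated r) (ht : separationTime r k ≤ t)
    (h : r l ∈ cylinder (r k) t) : l = k :=
  Nat.sInf_mem (hr k) l (cylinder_anti _ ht h)

lemma not_isBranching_of_unique (h : ∀ l, r l ∈ cylinder (r k) t → l = k) :
    ¬IsBranching r k t := by
  intro hb
  obtain ⟨l, hl, hne⟩ := hb !(r k t)
  rw [h l hl] at hne
  simp at hne

lemma IsSeparated.compress_eq_code (hr : IsSeparated r) (ht : separationTime r k ≤ t) :
    compress r k t = code r k := by
  induction t, ht using Nat.le_induction with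
  | base => rfl
  | succ t ht ih =>
    have hunique : ∀ l, r l ∈ cylinder (r k) t → l = k := fun l => hr.eq_of_mem_cylinder ht
    rw [compress_succ_of_not_isBranching (not_isBranching_of_unique hunique), ih]

lemma IsSeparated.compress_prefix_code (hr : IsSeparated r) (k : X) (t : ℕ) :
    compress r k t <+: code r k := by
  rw [← hr.compress_eq_code (le_max_right t _)]
  exact compress_prefix k (le_max_left _ _)

lemma IsSeparated.exists_isBranching (hr : IsSeparated r) (h : compress r k t ≠ code r k) :
    ∃ i, t ≤ i ∧ compress r k i = compress r k t ∧ IsBranching r k i := by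
  by_contra! hcon
  have compress_const (s : ℕ) (hs : t ≤ s) : compress r k s = compress r k t := by
    induction s, hs using Nat.le_induction with
    | base => rfl
    | succ s hs ih => rw [compress_succ_of_not_isBranching (hcon s hs ih), ih]
  refine h ?_
  rw [← hr.compress_eq_code (le_max_right t _), compress_const _ (le_max_left _ _)]

lemma IsSeparated.leafPoint_mem_cone_compress (hr : IsSeparated r) (k : X) (t : ℕ)
    (u : ℕ → Bool) : leafPoint r k u ∈ cone (compress r k t) := by
  obtain ⟨v, hv⟩ := hr.compress_prefix_code k t
  rw [leafPoint, ← hv]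
  exact cone_append_subset _ _ ⟨u, rfl⟩

lemma eq_of_mem_cone_append_singleton {A : Type*} {α : List A} {a b : A} {x : ℕ → A}
    (ha : x ∈ cone (α ++ [a])) (hb : x ∈ cone (α ++ [b])) : a = b := by
  have hxa := mem_cone_iff.1 ha α.length (by simp)
  have hxb := mem_cone_iff.1 hb α.length (by simp)
  simpa using hxa.symm.trans hxb

lemma IsSeparated.leafPoint_mem_cone_compress_iff (hr : IsSeparated r) {u : ℕ → Bool} :
    leafPoint r l u ∈ cone (compress r k t) ↔ r l ∈ cylinder (r k) t := by
  refine ⟨fun h => ?_, fun h => compress_congr h ▸ hr.leafPoint_mem_cone_compress l t u⟩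
  induction t with
  | zero => simp
  | succ t ih =>
    have hag : r l ∈ cylinder (r k) t := by
      obtain ⟨v, hv⟩ := compress_prefix (r := r) k t.le_succ
      exact ih (cone_append_subset _ v (hv ▸ h))
    refine mem_cylinder_succ_iff.2 ⟨hag, by_contra fun hne => hne ?_⟩
    have hbranch : IsBranching r k t := isBranching_of_apply_ne hag hne
    have hl := hr.leafPoint_mem_cone_compress l (t + 1) u
    rw [compress_succ_of_isBranching ((isBranching_congr hag).2 hbranch), compress_congr hag] at hl
    rw [compress_succ_of_isBranching hbranch] at h
    exact eq_of_mem_cone_append_singleton hl h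

lemma IsSeparated.compress_eq_code_iff (hr : IsSeparated r) :
    compress r k t = code r k ↔ ∀ l, r l ∈ cylinder (r k) t → l = k := by
  constructor
  · intro h l hl
    have hmem : leafPoint r l 0 ∈ cone (compress r k (separationTime r k)) := by
      rw [hr.compress_eq_code le_rfl, ← h]
      exact hr.leafPoint_mem_cone_compress_iff.2 hl
    exact hr.eq_of_mem_cylinder le_rfl (hr.leafPoint_mem_cone_compress_iff.1 hmem)
  · intro hunique
    by_contra hne
    obtain ⟨i, hti, -, hi⟩ := hr.exists_isBranching hne
    exact not_isBranching_of_unique (fun l hl => hunique l (cylinder_anti _ hti hl)) hi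

lemma IsSeparated.eq_of_leafPoint_mem_cone_code (hr : IsSeparated r) {u : ℕ → Bool}
    (h : leafPoint r l u ∈ cone (code r k)) : l = k :=
  hr.eq_of_mem_cylinder le_rfl (hr.leafPoint_mem_cone_compress_iff.1 h)

lemma IsSeparated.word_eq_compress_or_code_append [Nonempty X] (hr : IsSeparated r)
    (α : List Bool) : (∃ k t, α = compress r k t) ∨ ∃ k v, α = code r k ++ v := by
  induction α using List.reverseRecOn with
  | nil => exact .inl ⟨Classical.arbitrary X, 0, rfl⟩
  | append_singleton α b ih =>
    rcases ih with ⟨k, t, rfl⟩ | ⟨k, v, rfl⟩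
    · by_cases hleaf : compress r k t = code r k
      · exact .inr ⟨k, [b], by rw [hleaf]⟩
      · obtain ⟨i, -, hi, hbranch⟩ := hr.exists_isBranching hleaf
        obtain ⟨l, hl, rfl⟩ := hbranch b
        refine .inl ⟨l, i + 1, ?_⟩
        rw [compress_succ_of_isBranching ((isBranching_congr hl).2 hbranch), compress_congr hl, hi]
    · exact .inr ⟨k, v ++ [b], List.append_assoc _ _ _⟩

lemma IsSeparated.denseRange_leafPoint [Nonempty X] (hr : IsSeparated r) :
    DenseRange (uncurry (leafPoint r)) := by
  refine dense_of_inter_cone_nonempty fun α => ?_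
  rcases hr.word_eq_compress_or_code_append α with ⟨k, t, rfl⟩ | ⟨k, v, rfl⟩
  · exact ⟨_, hr.leafPoint_mem_cone_compress k t 0, (k, 0), rfl⟩
  · exact ⟨_, ⟨0, wordAppend_append _ _ _⟩, (k, wordAppend v 0), rfl⟩

lemma IsSeparated.exists_compress_eq_imp_eq_code (hr : IsSeparated r) (β : List Bool) :
    ∃ T, ∀ k, ∀ t ≥ T, compress r k t = β → compress r k t = code r k := by
  by_cases h : ∃ t k, compress r k t = β ∧ IsBranching r k t
  · obtain ⟨T, k, rfl, hbranch⟩ := h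
    refine ⟨T + 1, fun l t ht hlt => ?_⟩
    have hag : r l ∈ cylinder (r k) T :=
      hr.leafPoint_mem_cone_compress_iff.1 (hlt ▸ hr.leafPoint_mem_cone_compress l t 0)
    have hlen := (compress_prefix (r := r) l ht).length_le
    rw [compress_succ_of_isBranching ((isBranching_congr hag).2 hbranch), compress_congr hag,
      hlt, List.length_append, List.length_singleton] at hlen
    lia
  · refine ⟨0, fun l t _ hlt => by_contra fun hne => ?_⟩
    obtain ⟨i, -, hi, hbranch⟩ := hr.exists_isBranching hne
    exact h ⟨i, l, hi.trans hlt, hbranch⟩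

lemma IsSeparated.exists_le_length_compress (hr : IsSeparated r) (m : ℕ) :
    ∃ T, ∀ k, ∀ t ≥ T, compress r k t ≠ code r k → m ≤ (compress r k t).length := by
  choose T hT using hr.exists_compress_eq_imp_eq_code
  obtain ⟨B, hB⟩ := ((List.finite_length_lt Bool m).image T).bddAbove
  refine ⟨B, fun k t ht hne => le_of_not_gt fun hlt => hne ?_⟩
  exact hT _ k t ((hB (mem_image_of_mem T hlt)).trans ht) rfl

end Compression

section SubtreeIso

variable {G X A : Type*} [Group G] [MulAction G X]

/-- The action of `h` maps the set of branches through the vertex of `r k` at depth `t` onto the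
set of branches through the vertex of `r k'` at depth `t'`, and does not change what these branches
do below those vertices. -/
structure IsSubtreeIso (r : X → ℕ → A) (h : G) (t : ℕ) (k : X) (t' : ℕ) (k' : X) : Prop where
  smul_mem_iff : ∀ l, r (h • l) ∈ cylinder (r k') t' ↔ r l ∈ cylinder (r k) t
  apply_add : ∀ l, r l ∈ cylinder (r k) t → ∀ m, r (h • l) (t' + m) = r l (t + m)

namespace IsSubtreeIso

section

variable {r : X → ℕ → A} {h : G} {t t' : ℕ} {k k' : X}

lemma add (hiso : IsSubtreeIso r h t k t' k') {j : ℕ} (hj : ∀ i < j, r k' (t' + i) = r k (t + i)) :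
    IsSubtreeIso r h (t + j) k (t' + j) k' where
  smul_mem_iff l := by
    rw [mem_cylinder_add_iff, mem_cylinder_add_iff, hiso.smul_mem_iff]
    refine and_congr_right fun hl => forall₂_congr fun i hi => ?_
    rw [hiso.apply_add l hl, hj i hi]
  apply_add l hl m := by
    rw [add_assoc, add_assoc, hiso.apply_add l (mem_cylinder_add_iff.1 hl).1]

lemma smul_mem_add_iff (hiso : IsSubtreeIso r h t k t' k') {l l' : X}
    (hl : r l ∈ cylinder (r k) t) (m : ℕ) :
    r (h • l') ∈ cylinder (r (h • l)) (t' + m) ↔ r l' ∈ cylinder (r l) (t + m) := by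
  rw [mem_cylinder_add_iff, mem_cylinder_add_iff,
    mem_cylinder_iff_eq.1 ((hiso.smul_mem_iff l).2 hl), mem_cylinder_iff_eq.1 hl,
    hiso.smul_mem_iff]
  refine and_congr_right fun hl' => forall₂_congr fun i _ => ?_
  rw [hiso.apply_add l hl, hiso.apply_add l' hl']

end

variable {r : X → ℕ → Bool} {h : G} {t t' : ℕ} {k k' l : X}

lemma isBranching_smul_iff (hiso : IsSubtreeIso r h t k t' k') (hl : r l ∈ cylinder (r k) t)
    (m : ℕ) : IsBranching r (h • l) (t' + m) ↔ IsBranching r l (t + m) := by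
  refine forall_congr' fun b => (MulAction.surjective h).exists.trans (exists_congr fun l' => ?_)
  rw [hiso.smul_mem_add_iff hl]
  refine and_congr_right fun hl' => ?_
  rw [hiso.apply_add l' (mem_cylinder_iff_eq.1 hl ▸ (mem_cylinder_add_iff.1 hl').1)]

lemma exists_compress_eq_append (hiso : IsSubtreeIso r h t k t' k')
    (hl : r l ∈ cylinder (r k) t) (m : ℕ) :
    ∃ v, compress r l (t + m) = compress r k t ++ v ∧
      compress r (h • l) (t' + m) = compress r k' t' ++ v := by
  induction m with
  | zero => exact ⟨[], by simp [compress_congr hl], by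
      simp [compress_congr ((hiso.smul_mem_iff l).2 hl)]⟩
  | succ m ih =>
    obtain ⟨v, hv, hv'⟩ := ih
    rw [← add_assoc, ← add_assoc, compress, compress, hv, hv', hiso.isBranching_smul_iff hl,
      hiso.apply_add l hl]
    exact ⟨_, List.append_assoc _ _ _, List.append_assoc _ _ _⟩

lemma exists_code_eq_append (hiso : IsSubtreeIso r h t k t' k') (hr : IsSeparated r)
    (hl : r l ∈ cylinder (r k) t) :
    ∃ v, code r l = compress r k t ++ v ∧ code r (h • l) = compress r k' t' ++ v := by
  obtain ⟨v, hv, hv'⟩ := hiso.exists_compress_eq_append hl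
    (separationTime r l + separationTime r (h • l))
  rw [hr.compress_eq_code (by lia)] at hv hv'
  exact ⟨v, hv, hv'⟩

lemma leafPoint_smul (hiso : IsSubtreeIso r h t k t' k') (hr : IsSeparated r) {u x : ℕ → Bool}
    (hx : leafPoint r l u = wordAppend (compress r k t) x) :
    leafPoint r (h • l) u = wordAppend (compress r k' t') x := by
  have hl : r l ∈ cylinder (r k) t := hr.leafPoint_mem_cone_compress_iff.1 ⟨x, hx.symm⟩
  obtain ⟨v, hv, hv'⟩ := hiso.exists_code_eq_append hr hl
  rw [leafPoint, hv, wordAppend_append] at hx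
  rw [leafPoint, hv', wordAppend_append, wordAppend_injective _ hx]

end IsSubtreeIso

end SubtreeIso

section Transducer

variable {G X A Q : Type*} [Group G] [MulAction G X]

/-- The action of `g` on the tree of branches is computed by a transducer with state set `Q`: the
first `t` letters of `r k` determine the first `τ t` letters of `r (g • k)`, where `τ t → ∞`, and
between two vertices at which the transducer is in the same state there is an isomorphism of
subtrees that `g` intertwines with an isomorphism of the image subtrees. -/
structure IsTransducer (r : X → ℕ → A) (g : G) (τ : ℕ → ℕ) (state : ℕ → X → Q) : Prop where
  smul_mem_cylinder : ∀ {t k l}, r l ∈ cylinder (r k) t → r (g • l) ∈ cylinder (r (g • k)) (τ t)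
  tendsto : Tendsto τ atTop atTop
  exists_isSubtreeIso : ∀ {t k t' k'}, state t k = state t' k' →
    ∃ h h' : G, SemiconjBy g h h' ∧ IsSubtreeIso r h t k t' k' ∧
      IsSubtreeIso r h' (τ t) (g • k) (τ t') (g • k')

variable {r : X → ℕ → Bool} {g : G} {τ : ℕ → ℕ} {state : ℕ → X → Q}

lemma IsSeparated.tendsto_leafPoint_smul_nhds_leafPoint (hr : IsSeparated r) (g : G) (k : X)
    (y : ℕ → Bool) :
    Tendsto (uncurry fun l u => leafPoint r (g • l) u)
      (comap (uncurry (leafPoint r)) (𝓝 (leafPoint r k y))) (𝓝 (leafPoint r (g • k) y)) := by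
  let F (z : ℕ → Bool) : ℕ → Bool := leafPoint r (g • k) fun i => z ((code r k).length + i)
  have hF_cont : Continuous F := (continuous_wordAppend _).comp (by fun_prop)
  have hF (u : ℕ → Bool) : F (leafPoint r k u) = leafPoint r (g • k) u :=
    congrArg (leafPoint r (g • k)) (leftInverse_wordAppend _ u)
  rw [← hF y]
  refine (hF_cont.continuousAt.tendsto.comp tendsto_comap).congr' ?_
  have hnear : cone (code r k) ∈ 𝓝 (leafPoint r k y) := (isOpen_cone _).mem_nhds ⟨y, rfl⟩
  filter_upwards [preimage_mem_comap hnear]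
  rintro ⟨l, u⟩ hl
  obtain rfl : l = k := hr.eq_of_leafPoint_mem_cone_code hl
  exact hF u

lemma IsTransducer.compress_smul_ne_code (hg : IsTransducer r g τ state) (hr : IsSeparated r)
    {k : X} {t : ℕ} (h : compress r k t ≠ code r k) :
    compress r (g • k) (τ t) ≠ code r (g • k) := by
  refine mt (fun hleaf => hr.compress_eq_code_iff.2 fun l hl => ?_) h
  exact MulAction.injective g (hr.compress_eq_code_iff.1 hleaf _ (hg.smul_mem_cylinder hl))

lemma IsTransducer.exists_leafPoint_smul_mem_cylinder [Nonempty X]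
    (hg : IsTransducer r g τ state) (hr : IsSeparated r) {x : ℕ → Bool}
    (hx : ∀ k, x ∉ cone (code r k)) (m : ℕ) :
    ∃ α, x ∈ cone α ∧ ∀ l u l' u', leafPoint r l u ∈ cone α → leafPoint r l' u' ∈ cone α →
      leafPoint r (g • l) u ∈ cylinder (leafPoint r (g • l') u') m := by
  obtain ⟨T, hT⟩ := hr.exists_le_length_compress m
  obtain ⟨M, hM⟩ := eventually_atTop.1 (hg.tendsto.eventually_ge_atTop T)
  have hxM : x ∈ cone ((List.range M).map x) := cylinder_eq_cone x M ▸ self_mem_cylinder x M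
  rcases hr.word_eq_compress_or_code_append ((List.range M).map x) with ⟨k, t, ht⟩ | ⟨k, v, hv⟩
  · rw [ht] at hxM
    have hMt : M ≤ t := by
      simpa [← ht] using length_compress_le (r := r) k t
    have hlong : m ≤ (compress r (g • k) (τ t)).length :=
      hT _ _ (hM t hMt) (hg.compress_smul_ne_code hr fun hleaf => hx k (hleaf ▸ hxM))
    refine ⟨_, hxM, fun l u l' u' hl hl' => cylinder_anti _ hlong ?_⟩
    have smul_mem {l : X} {u : ℕ → Bool} (hl : leafPoint r l u ∈ cone (compress r k t)) :
        leafPoint r (g • l) u ∈ cone (compress r (g • k) (τ t)) :=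
      hr.leafPoint_mem_cone_compress_iff.2
        (hg.smul_mem_cylinder (hr.leafPoint_mem_cone_compress_iff.1 hl))
    exact cone_eq_cylinder (smul_mem hl') ▸ smul_mem hl
  · exact absurd (cone_append_subset _ v (hv ▸ hxM)) (hx k)

lemma IsTransducer.exists_tendsto_leafPoint_smul [Nonempty X] (hg : IsTransducer r g τ state)
    (hr : IsSeparated r) (x : ℕ → Bool) :
    ∃ z, Tendsto (uncurry fun k u => leafPoint r (g • k) u)
      (comap (uncurry (leafPoint r)) (𝓝 x)) (𝓝 z) := by
  by_cases hx : ∃ k, x ∈ cone (code r k)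
  · obtain ⟨k, y, rfl⟩ := hx
    exact ⟨_, hr.tendsto_leafPoint_smul_nhds_leafPoint g k y⟩
  · have : (comap (uncurry (leafPoint r)) (𝓝 x)).NeBot :=
      comap_neBot fun s hs => by
        obtain ⟨_, hmem, d, rfl⟩ := mem_closure_iff_nhds.1 (hr.denseRange_leafPoint x) s hs
        exact ⟨d, hmem⟩
    refine exists_tendsto_of_eventually_mem_cylinder fun m => ?_
    obtain ⟨α, hxα, hα⟩ := hg.exists_leafPoint_smul_mem_cylinder hr (not_exists.1 hx) m
    exact ⟨_, preimage_mem_comap ((isOpen_cone α).mem_nhds hxα),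
      fun d hd d' hd' => hα _ _ _ _ hd hd'⟩

lemma IsSeparated.dense_preimage_range_leafPoint [Nonempty X] (hr : IsSeparated r)
    (α : List Bool) : Dense (wordAppend α ⁻¹' range (uncurry (leafPoint r))) :=
  hr.denseRange_leafPoint.preimage (isOpenEmbedding_wordAppend α).isOpenMap

lemma IsTransducer.exists_continuous_factor [Nonempty X] (hg : IsTransducer r g τ state)
    (hr : IsSeparated r) {F : (ℕ → Bool) → (ℕ → Bool)} (hF_cont : Continuous F)
    (hF : ∀ k u, F (leafPoint r k u) = leafPoint r (g • k) u) (t : ℕ) (k : X) :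
    ∃ c : (ℕ → Bool) → (ℕ → Bool), Continuous c ∧
      ∀ x, F (wordAppend (compress r k t) x) = wordAppend (compress r (g • k) (τ t)) (c x) := by
  let c (x : ℕ → Bool) (i : ℕ) : Bool :=
    F (wordAppend (compress r k t) x) ((compress r (g • k) (τ t)).length + i)
  have hF_comp : Continuous (F ∘ wordAppend (compress r k t)) :=
    hF_cont.comp (continuous_wordAppend _)
  have hc : Continuous c := continuous_pi fun i => (continuous_apply _).comp hF_comp
  refine ⟨c, hc, congrFun <| hF_comp.ext_on
    (hr.dense_preimage_range_leafPoint (compress r k t))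
    ((continuous_wordAppend _).comp hc) ?_⟩
  rintro x ⟨⟨l, u⟩, hx : leafPoint r l u = _⟩
  have hl : r l ∈ cylinder (r k) t := hr.leafPoint_mem_cone_compress_iff.1 ⟨x, hx.symm⟩
  obtain ⟨y, hy⟩ : leafPoint r (g • l) u ∈ cone (compress r (g • k) (τ t)) :=
    hr.leafPoint_mem_cone_compress_iff.2 (hg.smul_mem_cylinder hl)
  have hFx : F (wordAppend (compress r k t) x) = wordAppend (compress r (g • k) (τ t)) y := by
    rw [← hx, hF, hy]
  have hcx : c x = y := funext fun i => by simp only [c, hFx, wordAppend_length_add]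
  exact hFx.trans (congrArg (wordAppend _) hcx.symm)

lemma IsTransducer.exists_common_factor [Nonempty X] (hg : IsTransducer r g τ state)
    (hr : IsSeparated r) {F : (ℕ → Bool) → (ℕ → Bool)} (hF_cont : Continuous F)
    (hF : ∀ k u, F (leafPoint r k u) = leafPoint r (g • k) u) {t t' : ℕ} {k k' : X}
    (hstate : state t k = state t' k') :
    ∃ c : (ℕ → Bool) → (ℕ → Bool),
      (∀ x, F (wordAppend (compress r k t) x) = wordAppend (compress r (g • k) (τ t)) (c x)) ∧
      ∀ x, F (wordAppend (compress r k' t') x) =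
        wordAppend (compress r (g • k') (τ t')) (c x) := by
  obtain ⟨h, h', hgh, hiso, hiso'⟩ := hg.exists_isSubtreeIso hstate
  obtain ⟨c, hc_cont, hc⟩ := hg.exists_continuous_factor hr hF_cont hF t k
  refine ⟨c, hc, congrFun <| (hF_cont.comp (continuous_wordAppend _)).ext_on
    (hr.dense_preimage_range_leafPoint (compress r k t))
    ((continuous_wordAppend _).comp hc_cont) ?_⟩
  rintro x ⟨⟨l, u⟩, hx : leafPoint r l u = _⟩
  have hgx : leafPoint r (g • l) u = wordAppend (compress r (g • k) (τ t)) (c x) := by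
    rw [← hF, hx, hc]
  calc F (wordAppend (compress r k' t') x)
      = leafPoint r (g • h • l) u := by rw [← hiso.leafPoint_smul hr hx, hF]
    _ = leafPoint r (h' • g • l) u := by rw [← mul_smul, hgh.eq, mul_smul]
    _ = wordAppend (compress r (g • k') (τ t')) (c x) := hiso'.leafPoint_smul hr hgx

lemma IsTransducer.isRational [Nonempty X] [Finite Q] (hg : IsTransducer r g τ state)
    (hr : IsSeparated r) {f : (ℕ → Bool) ≃ₜ (ℕ → Bool)}
    (hf : ∀ k u, f (leafPoint r k u) = leafPoint r (g • k) u) : IsRational f := by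
  let atState (q : Q) := {c | ∃ t k, state t k = q ∧ IsLocalAction f (compress r k t) c}
  let belowLeaf := {c | ∃ k v, IsLocalAction f (code r k ++ v) c}
  have hcover : {c | ∃ α, IsLocalAction f α c} ⊆ (⋃ q, atState q) ∪ belowLeaf := by
    rintro c ⟨α, hα⟩
    rcases hr.word_eq_compress_or_code_append α with ⟨k, t, rfl⟩ | ⟨k, v, rfl⟩
    · exact .inl (mem_iUnion.2 ⟨state t k, t, k, rfl, hα⟩)
    · exact .inr ⟨k, v, hα⟩
  have hatState (q : Q) : (atState q).Subsingleton := by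
    rintro c ⟨t, k, hq, hc⟩ c' ⟨t', k', hq', hc'⟩
    obtain ⟨b, hb, hb'⟩ :=
      hg.exists_common_factor hr f.continuous hf (hq.trans hq'.symm)
    exact hc.eq_of_factor hc' hb hb'
  have hbelowLeaf : belowLeaf.Subsingleton := by
    rintro c ⟨k, v, hc⟩ c' ⟨k', v', hc'⟩
    have factor (k : X) (v : List Bool) (x : ℕ → Bool) :
        f (wordAppend (code r k ++ v) x) = wordAppend (code r (g • k) ++ v) (id x) := by
      simpa only [leafPoint, wordAppend_append, id_eq] using hf k (wordAppend v x)
    exact hc.eq_of_factor hc' (factor k v) (factor k' v')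
  exact ((finite_iUnion fun q => (hatState q).finite).union hbelowLeaf.finite).subset hcover

theorem exists_injective_monoidHom_isRational_of_isTransducer_bool [Nonempty X] [FaithfulSMul G X]
    (hr : IsSeparated r)
    (H : ∀ g : G, ∃ (Q : Type*) (_ : Finite Q) (τ : ℕ → ℕ) (state : ℕ → X → Q),
      IsTransducer r g τ state) :
    ∃ φ : G →* ((ℕ → Bool) ≃ₜ (ℕ → Bool)), Injective φ ∧ ∀ g, IsRational (φ g) := by
  have hext (g : G) : ∃ F : (ℕ → Bool) → ℕ → Bool,
      Continuous F ∧ ∀ k u, F (leafPoint r k u) = leafPoint r (g • k) u := by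
    obtain ⟨Q, _, τ, state, hg⟩ := H g
    obtain ⟨F, hF_cont, hF⟩ := exists_continuous_extension hr.denseRange_leafPoint _
      (hg.exists_tendsto_leafPoint_smul hr)
    exact ⟨F, hF_cont, fun k u => hF (k, u)⟩
  obtain ⟨φ, hφ⟩ := exists_monoidHom_of_continuous_extensions hr.denseRange_leafPoint hext
  refine ⟨φ, fun g h hgh => ?_, fun g => ?_⟩
  · refine FaithfulSMul.eq_of_smul_eq_smul (α := X) fun k => ?_
    have heq : leafPoint r (g • k) 0 = leafPoint r (h • k) 0 := by
      rw [← hφ, ← hφ, hgh]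
    exact hr.eq_of_leafPoint_mem_cone_code ⟨0, heq.symm⟩
  · obtain ⟨Q, _, τ, state, hg⟩ := H g
    exact hg.isRational hr (hφ g)

end Transducer

section UnaryCode

variable {A : Type*} {L : ℕ} (e : A ↪ Fin L)

/-- The binary sequence in which the letter `a` of `s` is encoded by the block of length `L` whose
only `true` entry is at position `e a`. -/
def unaryCode (s : ℕ → A) (t : ℕ) : Bool := decide ((e (s (t / L)) : ℕ) = t % L)

lemma unaryCode_mul_add (s : ℕ → A) (n m : ℕ) :
    unaryCode e s (n * L + m) = unaryCode e (fun i => s (n + i)) m := by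
  have hL := (e (s 0)).pos
  simp [unaryCode, Nat.add_div_of_dvd_right, hL]

lemma unaryCode_mem_cylinder_mul_iff {s s' : ℕ → A} {n : ℕ} :
    unaryCode e s' ∈ cylinder (unaryCode e s) (n * L) ↔ s' ∈ cylinder s n := by
  constructor
  · intro h i hi
    have hblock := h (i * L + e (s i)) (by nlinarith [(e (s i)).isLt])
    rw [unaryCode_mul_add, unaryCode_mul_add, unaryCode, unaryCode,
      Nat.div_eq_of_lt (e (s i)).isLt, Nat.mod_eq_of_lt (e (s i)).isLt] at hblock
    exact e.injective (Fin.ext (by simpa using hblock))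
  · intro h t ht
    rw [unaryCode, unaryCode, h _ (Nat.div_lt_of_lt_mul (by lia))]

lemma mem_cylinder_div_of_unaryCode_mem {s s' : ℕ → A} {t : ℕ}
    (h : unaryCode e s' ∈ cylinder (unaryCode e s) t) : s' ∈ cylinder s (t / L) :=
  (unaryCode_mem_cylinder_mul_iff e).1 (cylinder_anti _ (Nat.div_mul_le_self t L) h)

variable {G X Q : Type*} {s : X → ℕ → A}

lemma IsSeparated.unaryCode (hs : IsSeparated s) : IsSeparated (fun k => unaryCode e (s k)) := by
  intro k
  obtain ⟨T, hT⟩ := hs k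
  exact ⟨T * L, fun l hl => hT l ((unaryCode_mem_cylinder_mul_iff e).1 hl)⟩

variable [Group G] [MulAction G X]

lemma IsSubtreeIso.unaryCode {h : G} {t t' : ℕ} {k k' : X} (hiso : IsSubtreeIso s h t k t' k') :
    IsSubtreeIso (fun k => unaryCode e (s k)) h (t * L) k (t' * L) k' where
  smul_mem_iff l := by
    simp only [unaryCode_mem_cylinder_mul_iff, hiso.smul_mem_iff]
  apply_add l hl m := by
    simp only [unaryCode_mul_add,
      hiso.apply_add l ((unaryCode_mem_cylinder_mul_iff e).1 hl)]

lemma IsTransducer.unaryCode {g : G} {τ : ℕ → ℕ} {state : ℕ → X → Q}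
    (hg : IsTransducer s g τ state) (hL : 0 < L) :
    IsTransducer (fun k => unaryCode e (s k)) g (fun t => τ (t / L) * L)
      (fun t k => ((⟨t % L, Nat.mod_lt t hL⟩ : Fin L), state (t / L) k, s k (t / L))) where
  smul_mem_cylinder h :=
    (unaryCode_mem_cylinder_mul_iff e).2
      (hg.smul_mem_cylinder (mem_cylinder_div_of_unaryCode_mem e h))
  tendsto := (hg.tendsto.comp (Nat.tendsto_div_const_atTop hL.ne')).atTop_mul_const' hL
  exists_isSubtreeIso {t k t' k'} hstate := by
    simp only [Prod.mk.injEq, Fin.mk.injEq] at hstate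
    obtain ⟨hmod, hstate, hletter⟩ := hstate
    obtain ⟨h, h', hgh, hiso, hiso'⟩ := hg.exists_isSubtreeIso hstate
    refine ⟨h, h', hgh, ?_, hiso'.unaryCode e⟩
    have hadd := (hiso.unaryCode e).add (j := t % L) fun i hi => by
      have hi : i / L = 0 := Nat.div_eq_of_lt (hi.trans (Nat.mod_lt t hL))
      rw [unaryCode_mul_add, unaryCode_mul_add]
      simp only [_root_.unaryCode, hi, add_zero, hletter]
    rwa [Nat.div_add_mod', hmod, Nat.div_add_mod'] at hadd

theorem exists_injective_monoidHom_isRational_of_isTransducer [Finite A] [Nonempty X]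
    [FaithfulSMul G X] (hs : IsSeparated s)
    (H : ∀ g : G, ∃ (Q : Type*) (_ : Finite Q) (τ : ℕ → ℕ) (state : ℕ → X → Q),
      IsTransducer s g τ state) :
    ∃ φ : G →* ((ℕ → Bool) ≃ₜ (ℕ → Bool)), Injective φ ∧ ∀ g, IsRational (φ g) := by
  obtain ⟨L, ⟨e⟩⟩ := Finite.exists_equiv_fin A
  have hL := (e (s (Classical.arbitrary X) 0)).pos
  refine exists_injective_monoidHom_isRational_of_isTransducer_bool
    (hs.unaryCode e.toEmbedding) fun g => ?_
  obtain ⟨Q, _, τ, state, hg⟩ := H g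
  exact ⟨Fin L × Q × A, inferInstance, _, _, hg.unaryCode e.toEmbedding hL⟩

end UnaryCode

/-- A length function on a group whose distance `d x y = |x⁻¹ y|` is a proper discrete geodesic
metric that is Gromov hyperbolic, the latter stated as the four-point inequality. -/
structure HyperbolicNorm (G : Type*) [Group G] where
  toFun : G → ℕ
  δ : ℕ
  norm_one : toFun 1 = 0
  eq_one_of_norm_eq_zero : ∀ {g}, toFun g = 0 → g = 1
  norm_inv : ∀ g, toFun g⁻¹ = toFun g
  norm_mul_le : ∀ g h, toFun (g * h) ≤ toFun g + toFun h
  exists_descent : ∀ {g}, g ≠ 1 → ∃ s, toFun s = 1 ∧ toFun (s⁻¹ * g) + 1 = toFun g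
  finite_ball : ∀ n, {g | toFun g ≤ n}.Finite
  four_point : ∀ x y z w, toFun (x⁻¹ * y) + toFun (z⁻¹ * w) ≤
    max (toFun (x⁻¹ * z) + toFun (y⁻¹ * w)) (toFun (x⁻¹ * w) + toFun (y⁻¹ * z)) + δ

namespace HyperbolicNorm

variable {G : Type*} [Group G]

instance : CoeFun (HyperbolicNorm G) fun _ => G → ℕ := ⟨toFun⟩

variable (N : HyperbolicNorm G)

/-- The left-invariant distance of a hyperbolic norm. -/
def dist (x y : G) : ℕ := N (x⁻¹ * y)

lemma dist_self (x : G) : N.dist x x = 0 := by rw [dist, inv_mul_cancel, N.norm_one]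

lemma dist_comm (x y : G) : N.dist x y = N.dist y x := by
  rw [dist, dist, ← N.norm_inv, mul_inv_rev, inv_inv]

lemma dist_triangle (x y z : G) : N.dist x z ≤ N.dist x y + N.dist y z := by
  simpa [dist, mul_assoc] using N.norm_mul_le (x⁻¹ * y) (y⁻¹ * z)

lemma dist_mul_left (g x y : G) : N.dist (g * x) (g * y) = N.dist x y := by
  simp [dist, mul_assoc]

lemma dist_mul_right_self (x y : G) : N.dist x (x * y) = N y := by
  rw [dist, inv_mul_cancel_left]

lemma dist_one_left (x : G) : N.dist 1 x = N x := by simp [dist]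

lemma dist_four_point (x y z w : G) : N.dist x y + N.dist z w ≤
    max (N.dist x z + N.dist y w) (N.dist x w + N.dist y z) + N.δ :=
  N.four_point x y z w

lemma exists_dist_eq_add_dist_eq {a e : G} {m : ℕ} (hm : m ≤ N.dist a e) :
    ∃ y, N.dist a y = m ∧ m + N.dist y e = N.dist a e := by
  induction m with
  | zero => exact ⟨a, N.dist_self a, zero_add _⟩
  | succ m ih =>
    obtain ⟨y, hay, hye⟩ := ih (by lia)
    have hne : y⁻¹ * e ≠ 1 := fun h => by
      rw [dist, h, N.norm_one] at hye
      lia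
    obtain ⟨s, hs, hdesc⟩ := N.exists_descent hne
    have hse : N.dist (y * s) e + 1 = N.dist y e := by
      rw [dist, mul_inv_rev, mul_assoc, hdesc, dist]
    have hys : N.dist y (y * s) = 1 := (N.dist_mul_right_self y s).trans hs
    have h₁ := N.dist_triangle a y (y * s)
    have h₂ := N.dist_triangle a (y * s) e
    exact ⟨y * s, by lia, by lia⟩

/-- The radius of the balls on which germs of distance functions are recorded. -/
def radius : ℕ := 3 * N.δ + 1

/-- The possible germs of distance functions. Their values are bounded by the triangle inequality,
so that there are only finitely many germs. -/
abbrev Germ : Type _ := {x : G // N x ≤ N.radius} → Icc (-(N.radius : ℤ)) N.radius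

/-- The function `x ↦ d x q - d 1 q` on the ball of radius `N.radius` about `1`. Hence
`N.germ (p⁻¹ * k)` describes how the distance to `k` varies near `p`. -/
def germ (q : G) : N.Germ := fun x =>
  ⟨(N.dist x q : ℤ) - N q, by
    have h₁ := N.dist_triangle 1 x q
    have h₂ := N.dist_triangle x 1 q
    rw [N.dist_comm x 1] at h₂
    rw [N.dist_one_left, N.dist_one_left] at h₁ h₂
    have := x.2
    rw [mem_Icc]
    lia⟩

lemma germ_inv_mul_eq_iff {p k l : G} : N.germ (p⁻¹ * k) = N.germ (p⁻¹ * l) ↔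
    ∀ z, N.dist p z ≤ N.radius →
      (N.dist z k : ℤ) - N.dist p k = N.dist z l - N.dist p l := by
  have dist_inv_mul (x k : G) : N.dist x (p⁻¹ * k) = N.dist (p * x) k := by
    rw [← N.dist_mul_left p, mul_inv_cancel_left]
  have germ_coe (k : G) (x : {x : G // N x ≤ N.radius}) :
      (N.germ (p⁻¹ * k) x : ℤ) = N.dist (p * x) k - N.dist p k := by
    rw [← dist_inv_mul]
    rfl
  constructor
  · intro h z hz
    have hx := congrArg Subtype.val (congrFun h ⟨p⁻¹ * z, hz⟩)
    rwa [germ_coe, germ_coe, mul_inv_cancel_left] at hx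
  · intro h
    funext x
    refine Subtype.ext ?_
    rw [germ_coe, germ_coe]
    exact h (p * x) ((N.dist_mul_right_self p x).trans_le x.2)

/-- A canonical choice of a first step `s` of a geodesic from `1` to `q`, depending only on the germ
of `q`; junk value `1` if there is none. -/
noncomputable def firstStep (v : N.Germ) : G :=
  open Classical in
  if h : ∃ s : {x : G // N x ≤ N.radius}, N s = 1 ∧ (v s : ℤ) < 0 then h.choose else 1

lemma firstStep_spec {q : G} (hq : q ≠ 1) : N (N.firstStep (N.germ q)) = 1 ∧
    N ((N.firstStep (N.germ q))⁻¹ * q) + 1 = N q := by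
  have hdesc : ∃ s : {x : G // N x ≤ N.radius}, N s = 1 ∧ (N.germ q s : ℤ) < 0 := by
    obtain ⟨s, hs, hsq⟩ := N.exists_descent hq
    refine ⟨⟨s, by rw [hs, radius]; lia⟩, hs, ?_⟩
    simp only [germ, dist]
    lia
  rw [firstStep, dif_pos hdesc]
  have hspec := hdesc.choose_spec
  generalize hdesc.choose = s at hspec
  refine ⟨hspec.1, ?_⟩
  simp only [germ, dist] at hspec
  have := N.norm_mul_le s ((s : G)⁻¹ * q)
  rw [mul_inv_cancel_left] at this
  lia

lemma germ_one_nonneg (x : {x : G // N x ≤ N.radius}) : 0 ≤ (N.germ 1 x : ℤ) := by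
  simp [germ, N.norm_one]

lemma firstStep_germ_one : N.firstStep (N.germ 1) = 1 := by
  rw [firstStep, dif_neg]
  rintro ⟨s, -, hneg⟩
  exact (N.germ_one_nonneg s).not_gt hneg

lemma eq_one_of_germ_eq {q : G} (h : N.germ q = N.germ 1) : q = 1 := by
  by_contra hq
  have hstep := (N.firstStep_spec hq).1
  rw [h, N.firstStep_germ_one, N.norm_one] at hstep
  lia

lemma norm_firstStep_le (q : G) : N (N.firstStep (N.germ q)) ≤ 1 := by
  by_cases hq : q = 1
  · rw [hq, N.firstStep_germ_one, N.norm_one]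
    exact zero_le_one
  · exact (N.firstStep_spec hq).1.le

lemma norm_inv_firstStep_mul (q : G) : N ((N.firstStep (N.germ q))⁻¹ * q) = N q - 1 := by
  by_cases hq : q = 1
  · rw [hq, N.firstStep_germ_one, inv_one, one_mul, N.norm_one]
  · exact Nat.eq_sub_of_add_eq (N.firstStep_spec hq).2

/-- The `n`-th point of the canonical geodesic from `1` to `k`, which stays at `k` once it has got
there. -/
noncomputable def point : ℕ → G → G
  | 0, _ => 1
  | n + 1, k => point n k * N.firstStep (N.germ ((point n k)⁻¹ * k))

/-- The sequence of germs of the distance to `k` along the canonical geodesic from `1` to `k`. -/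
noncomputable def trace (k : G) (n : ℕ) : N.Germ := N.germ ((N.point n k)⁻¹ * k)

lemma point_succ (n : ℕ) (k : G) :
    N.point (n + 1) k = N.point n k * N.firstStep (N.trace k n) := rfl

lemma point_add (n m : ℕ) (k : G) :
    N.point (n + m) k = N.point n k * N.point m ((N.point n k)⁻¹ * k) := by
  induction m with
  | zero => exact (mul_one _).symm
  | succ m ih =>
    rw [← add_assoc, point_succ, point_succ, trace, trace, ih, mul_inv_rev, mul_assoc, mul_assoc]

lemma trace_add (k : G) (n m : ℕ) : N.trace k (n + m) = N.trace ((N.point n k)⁻¹ * k) m := by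
  rw [trace, trace, point_add, mul_inv_rev, mul_assoc]

lemma point_congr {n : ℕ} {k l : G} (h : N.trace l ∈ cylinder (N.trace k) n) :
    N.point n l = N.point n k := by
  induction n with
  | zero => rfl
  | succ n ih =>
    obtain ⟨hag, hlast⟩ := mem_cylinder_succ_iff.1 h
    rw [point_succ, point_succ, ih hag, hlast]

lemma inv_point_mul_point_congr {n n' m : ℕ} {k k' : G}
    (h : ∀ i < m, N.trace k (n + i) = N.trace k' (n' + i)) :
    (N.point n k)⁻¹ * N.point (n + m) k = (N.point n' k')⁻¹ * N.point (n' + m) k' := by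
  rw [point_add, point_add, inv_mul_cancel_left, inv_mul_cancel_left]
  refine N.point_congr fun i hi => ?_
  rw [← trace_add, ← trace_add, h i hi]

lemma trace_mem_cylinder_iff {n : ℕ} {k l : G} : N.trace l ∈ cylinder (N.trace k) n ↔
    ∀ i < n, N.germ ((N.point i k)⁻¹ * l) = N.trace k i := by
  induction n with
  | zero => simp
  | succ n ih =>
    rw [mem_cylinder_succ_iff, Nat.forall_lt_succ_right, ← ih]
    refine and_congr_right fun h => ?_
    rw [← N.point_congr h, trace]

lemma dist_point_self (n : ℕ) (k : G) : N.dist (N.point n k) k = N k - n := by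
  induction n with
  | zero => exact N.dist_one_left k
  | succ n ih =>
    rw [point_succ, dist, mul_inv_rev, mul_assoc, trace, norm_inv_firstStep_mul, ← dist, ih,
      Nat.sub_sub]

lemma norm_point_le (n : ℕ) (k : G) : N (N.point n k) ≤ n := by
  induction n with
  | zero => exact N.norm_one.le
  | succ n ih =>
    exact (N.norm_mul_le _ _).trans (add_le_add ih (N.norm_firstStep_le _))

lemma dist_point_point {i j : ℕ} {k : G} (hij : i ≤ j) (hj : j ≤ N k) :
    N.dist (N.point i k) (N.point j k) = j - i := by
  obtain ⟨m, rfl⟩ := Nat.exists_eq_add_of_le hij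
  have hle : N.dist (N.point i k) (N.point (i + m) k) ≤ m := by
    rw [point_add, dist_mul_right_self]
    exact N.norm_point_le _ _
  have := N.dist_triangle (N.point i k) (N.point (i + m) k) k
  rw [dist_point_self, dist_point_self] at this
  lia

lemma norm_point {n : ℕ} {k : G} (hn : n ≤ N k) : N (N.point n k) = n :=
  (N.dist_one_left _).symm.trans (N.dist_point_point (Nat.zero_le n) hn)

lemma eq_of_germ_point_eq {n : ℕ} {k l : G} (hk : N k ≤ n)
    (h : N.germ ((N.point n k)⁻¹ * l) = N.trace k n) : l = k := by
  have hrem : (N.point n k)⁻¹ * k = 1 := N.eq_one_of_norm_eq_zero <| by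
    rw [← dist, dist_point_self, Nat.sub_eq_zero_of_le hk]
  rw [trace, hrem] at h
  exact mul_left_cancel ((N.eq_one_of_germ_eq h).trans hrem.symm)

lemma eq_of_trace_mem_cylinder {n : ℕ} {k l : G} (hk : N k < n)
    (h : N.trace l ∈ cylinder (N.trace k) n) : l = k :=
  N.eq_of_germ_point_eq le_rfl (N.trace_mem_cylinder_iff.1 h _ hk)

lemma isSeparated_trace : IsSeparated N.trace :=
  fun k => ⟨N k + 1, fun _ => N.eq_of_trace_mem_cylinder (N k).lt_succ_self⟩

/-- `p` lies on a geodesic from `o` to `e` up to an error of `ε`. -/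
def AlmostBetween (ε : ℕ) (o p e : G) : Prop := N.dist o p + N.dist p e ≤ N.dist o e + ε

variable {N}

lemma AlmostBetween.exists_dist_le_radius {z p e : G} (h : N.AlmostBetween (2 * N.δ) z p e) :
    ∃ y, N.dist p y ≤ N.radius ∧ N.dist z y + N.dist y e = N.dist z e := by
  rw [AlmostBetween] at h
  rw [radius]
  rcases le_total (N.dist z p) (N.dist z e) with hle | hle
  · obtain ⟨y, hzy, hye⟩ := N.exists_dist_eq_add_dist_eq hle
    have h₁ := N.dist_four_point p y z e
    rw [N.dist_comm p z, N.dist_comm y z] at h₁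
    exact ⟨y, by lia, by lia⟩
  · exact ⟨e, by lia, by rw [N.dist_self, add_zero]⟩

lemma AlmostBetween.of_dist_lt {z o p e : G} (h : N.AlmostBetween N.δ o p e)
    (hz : N.dist z o + 2 * N.δ < N.dist z p + N.dist o p) :
    N.AlmostBetween (2 * N.δ) z p e := by
  have := N.dist_four_point z p o e
  rw [N.dist_comm p o] at this
  rw [AlmostBetween] at h ⊢
  lia

lemma AlmostBetween.concat {o b p e : G} (hop : N.AlmostBetween 0 o b p)
    (hbp : N.δ < 2 * N.dist b p) (hbe : N.AlmostBetween 0 b p e) : N.AlmostBetween N.δ o p e := by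
  have := N.dist_four_point o p b e
  rw [N.dist_comm p b] at this
  rw [AlmostBetween] at hop hbe ⊢
  lia

lemma dist_add_dist_le_of_germ_eq {z p k l : G} (h : N.germ (p⁻¹ * k) = N.germ (p⁻¹ * l))
    (hk : N.AlmostBetween (2 * N.δ) z p k) :
    N.dist z l + N.dist p k ≤ N.dist z k + N.dist p l := by
  obtain ⟨y, hpy, hzy⟩ := hk.exists_dist_le_radius
  have hy := N.germ_inv_mul_eq_iff.1 h y hpy
  have := N.dist_triangle z y l
  lia

-- Any `z` far from `p` sees `k` and `l` through the ball about `p`, where their germs agree.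
lemma germ_eq_of_germ_eq {o p a k l : G} (h : N.germ (p⁻¹ * k) = N.germ (p⁻¹ * l))
    (hk : N.AlmostBetween N.δ o p k) (hl : N.AlmostBetween N.δ o p l)
    (ha : ∀ z, N.dist a z ≤ N.radius →
      N.dist p z ≤ N.radius ∨ N.dist z o + 2 * N.δ < N.dist z p + N.dist o p) :
    N.germ (a⁻¹ * k) = N.germ (a⁻¹ * l) := by
  have hdiff (z : G) (hz : N.dist a z ≤ N.radius) :
      (N.dist z k : ℤ) - N.dist p k = N.dist z l - N.dist p l := by
    rcases ha z hz with hpz | hzo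
    · exact N.germ_inv_mul_eq_iff.1 h z hpz
    · have h₁ := dist_add_dist_le_of_germ_eq h (hk.of_dist_lt hzo)
      have h₂ := dist_add_dist_le_of_germ_eq h.symm (hl.of_dist_lt hzo)
      lia
  refine N.germ_inv_mul_eq_iff.2 fun z hz => ?_
  have h₁ := hdiff z hz
  have h₂ := hdiff a ((N.dist_self a).trans_le (Nat.zero_le _))
  lia

variable (N)

/-- The number of consecutive germs along a canonical geodesic which determine all earlier ones. -/
def memory : ℕ := 2 * N.δ + 1

lemma almostBetween_point_of_germ_eq {i a : ℕ} {k l : G} (hi : i < a) (hk : a + 2 * N.δ ≤ N k)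
    (h : N.germ ((N.point (a + 2 * N.δ) k)⁻¹ * l) = N.trace k (a + 2 * N.δ)) :
    N.AlmostBetween N.δ (N.point i k) (N.point (a + 2 * N.δ) k) l := by
  have hbp : N.dist (N.point (a - 1) k) (N.point (a + 2 * N.δ) k) = 2 * N.δ + 1 := by
    rw [N.dist_point_point (by lia) hk]
    lia
  refine AlmostBetween.concat (b := N.point (a - 1) k) ?_ (by lia) ?_
  · rw [AlmostBetween, hbp, N.dist_point_point (by lia) (by lia), N.dist_point_point (by lia) hk]
    lia
  · have hgerm := N.germ_inv_mul_eq_iff.1 h (N.point (a - 1) k)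
      (by rw [N.dist_comm, hbp, radius]; lia)
    rw [dist_point_self, dist_point_self] at hgerm
    rw [AlmostBetween]
    lia

lemma germ_point_eq_of_forall_memory {a : ℕ} {k l : G}
    (h : ∀ i < N.memory, N.germ ((N.point (a + i) k)⁻¹ * l) = N.trace k (a + i)) :
    ∀ i < a + N.memory, N.germ ((N.point i k)⁻¹ * l) = N.trace k i := by
  intro i hi
  rcases le_or_gt a i with hai | hia
  · obtain ⟨j, rfl⟩ := Nat.exists_eq_add_of_le hai
    exact h j (by lia)
  have hlast := h (2 * N.δ) (Nat.lt_succ_self _)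
  rcases le_or_gt (N k) (a + 2 * N.δ) with hk | hk
  · rw [N.eq_of_germ_point_eq hk hlast, trace]
  refine germ_eq_of_germ_eq hlast (N.almostBetween_point_of_germ_eq hia hk.le hlast)
    (N.almostBetween_point_of_germ_eq hia hk.le rfl) fun z hz => ?_
  rw [N.dist_point_point (by lia) hk.le, N.dist_comm z, N.dist_comm z]
  lia

/-- A bound on the delay with which left multiplication by `g` propagates along traces. -/
def lag (g : G) : ℕ := N g + N.radius + N.δ + 1

lemma trace_mul_mem_cylinder (g : G) {n : ℕ} {k l : G} (h : N.trace l ∈ cylinder (N.trace k) n) :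
    N.trace (g * l) ∈ cylinder (N.trace (g * k)) (n - N.lag g) := by
  rcases lt_or_ge (N k) n with hk | hk
  · rw [N.eq_of_trace_mem_cylinder hk h]
    exact self_mem_cylinder _ _
  rcases lt_or_ge (N l) n with hl | hl
  · rw [N.eq_of_trace_mem_cylinder hl ((mem_cylinder_comm _ _ _).1 h)]
    exact self_mem_cylinder _ _
  refine N.trace_mem_cylinder_iff.2 fun i hi => ?_
  have hpoint : N.point (n - 1) l = N.point (n - 1) k :=
    N.point_congr (cylinder_anti _ (Nat.sub_le n 1) h)
  have hbetween {e : G} (he : n ≤ N e) (hp : N.point (n - 1) e = N.point (n - 1) k) :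
      N.AlmostBetween N.δ g (g * N.point (n - 1) k) (g * e) := by
    rw [AlmostBetween, dist_mul_right_self, dist_mul_right_self, dist_mul_left, ← hp,
      dist_point_self, N.norm_point (by lia)]
    lia
  have hgerm := N.trace_mem_cylinder_iff.1 h (n - 1) (by lia)
  refine germ_eq_of_germ_eq (p := g * N.point (n - 1) k) ?_ (hbetween hl hpoint) (hbetween hk rfl)
    fun z hz => .inr ?_
  · rwa [mul_inv_rev, mul_assoc, inv_mul_cancel_left, mul_assoc, inv_mul_cancel_left]
  · have hzg : N.dist z g ≤ i + N.radius + N g := by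
      have h₁ := N.dist_triangle z (N.point i (g * k)) g
      have h₂ := N.dist_triangle (N.point i (g * k)) 1 g
      have h₃ := N.norm_point_le i (g * k)
      rw [N.dist_comm z (N.point i (g * k))] at h₁
      rw [N.dist_comm _ 1, dist_one_left, dist_one_left] at h₂
      lia
    have hgp : N.dist g (g * N.point (n - 1) k) = n - 1 := by
      rw [dist_mul_right_self, N.norm_point (by lia)]
    have := N.dist_triangle g z (g * N.point (n - 1) k)
    rw [N.dist_comm g z] at this
    rw [lag] at hi
    lia

lemma dist_point_mul_le (g : G) (n : ℕ) (k : G) :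
    N.dist (N.point (n - N.lag g) (g * k)) (g * N.point n k) ≤ N g + N.lag g + N.δ := by
  have hend : N.dist (g * N.point n k) (g * k) = N k - n := by
    rw [dist_mul_left, dist_point_self]
  have hy : N (g * N.point n k) ≤ N g + n :=
    (N.norm_mul_le _ _).trans (Nat.add_le_add_left (N.norm_point_le _ _) _)
  have hx := N.norm_point_le (n - N.lag g) (g * k)
  have hxe := N.dist_point_self (n - N.lag g) (g * k)
  have hgk := N.norm_mul_le g k
  have hkg : N k ≤ N g + N (g * k) := by
    simpa only [inv_mul_cancel_left, N.norm_inv] using N.norm_mul_le g⁻¹ (g * k)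
  rcases le_or_gt (N k) n with hk | hk
  · have := N.dist_triangle (N.point (n - N.lag g) (g * k)) (g * k) (g * N.point n k)
    rw [N.dist_comm (g * k)] at this
    lia
  · have hlag : N g ≤ N.lag g := by
      rw [lag]
      lia
    have := N.dist_four_point (N.point (n - N.lag g) (g * k)) (g * N.point n k) 1 (g * k)
    rw [N.dist_comm _ 1, N.dist_comm _ 1, dist_one_left, dist_one_left, dist_one_left] at this
    lia

/-- The last `N.memory` germs of `k` before time `n`, together with the time itself as long as it is
less than `N.memory`. -/
noncomputable def history (n : ℕ) (k : G) : Fin (N.memory + 1) × (Fin N.memory → N.Germ) :=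
  (⟨min n N.memory, Nat.lt_succ_of_le (min_le_right _ _)⟩, fun j => N.trace k (n - N.memory + j))

/-- The state of the transducer computing the action of `g`: the histories of `k` and of `g * k`,
and the position of `g * N.point n k` relative to the delayed canonical geodesic of `g * k`. -/
noncomputable def state (g : G) (n : ℕ) (k : G) :
    (Fin (N.memory + 1) × (Fin N.memory → N.Germ)) ×
      (Fin (N.memory + 1) × (Fin N.memory → N.Germ)) × {x : G // N x ≤ N g + N.lag g + N.δ} :=
  (N.history n k, N.history (n - N.lag g) (g * k),
    ⟨(N.point (n - N.lag g) (g * k))⁻¹ * (g * N.point n k), N.dist_point_mul_le g n k⟩)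

variable {N}

lemma trace_congr_of_history_eq {n n' : ℕ} {k k' : G} (h : N.history n k = N.history n' k') :
    min n N.memory = min n' N.memory ∧
      ∀ i < N.memory, N.trace k (n - N.memory + i) = N.trace k' (n' - N.memory + i) :=
  ⟨congrArg (fun x => x.1.val) h, fun i hi => congrFun (congrArg Prod.snd h) ⟨i, hi⟩⟩

lemma trace_mem_cylinder_of_history_eq {n n' : ℕ} {k k' l : G}
    (h : N.history n k = N.history n' k') (hl : N.trace l ∈ cylinder (N.trace k) n) :
    N.trace (N.point n' k' * (N.point n k)⁻¹ * l) ∈ cylinder (N.trace k') n' := by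
  obtain ⟨hmin, htrace⟩ := trace_congr_of_history_eq h
  rcases lt_or_ge n N.memory with hn | hn
  · obtain rfl : n' = n := by lia
    have hcyl : N.trace k ∈ cylinder (N.trace k') n' := fun i hi => by
      simpa [Nat.sub_eq_zero_of_le hn.le] using htrace i (by lia)
    rw [N.point_congr hcyl, mul_inv_cancel, one_mul]
    exact fun i hi => (hl i hi).trans (hcyl i hi)
  obtain ⟨a, rfl⟩ := Nat.exists_eq_add_of_le' hn
  obtain ⟨a', rfl⟩ := Nat.exists_eq_add_of_le' (show N.memory ≤ n' by lia)
  simp only [Nat.add_sub_cancel] at htrace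
  refine N.trace_mem_cylinder_iff.2 (N.germ_point_eq_of_forall_memory fun i hi => ?_)
  have hrel : (N.point (a + i) k)⁻¹ * N.point (a + N.memory) k =
      (N.point (a' + i) k')⁻¹ * N.point (a' + N.memory) k' := by
    have := N.inv_point_mul_point_congr (n := a + i) (n' := a' + i) (m := N.memory - i) (k := k)
      (k' := k') fun j hj => by rw [add_assoc, add_assoc]; exact htrace _ (by lia)
    rwa [add_assoc, add_assoc, Nat.add_sub_cancel' hi.le] at this
  rw [← htrace i hi, ← N.trace_mem_cylinder_iff.1 hl (a + i) (by lia), ← mul_assoc, ← mul_assoc,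
    ← hrel, mul_inv_cancel_right]

lemma isSubtreeIso_of_history_eq {n n' : ℕ} {k k' : G} (h : N.history n k = N.history n' k') :
    IsSubtreeIso N.trace (N.point n' k' * (N.point n k)⁻¹) n k n' k' where
  smul_mem_iff l := by
    refine ⟨fun hl => ?_, trace_mem_cylinder_of_history_eq h⟩
    have := trace_mem_cylinder_of_history_eq h.symm hl
    rwa [smul_eq_mul, ← mul_assoc, mul_assoc (N.point n k), inv_mul_cancel_left,
      mul_inv_cancel, one_mul] at this
  apply_add l hl m := by
    rw [smul_eq_mul, trace_add, trace_add, N.point_congr hl,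
      N.point_congr (trace_mem_cylinder_of_history_eq h hl), mul_assoc, inv_mul_cancel_left]

variable (N)

lemma isTransducer_trace (g : G) : IsTransducer N.trace g (· - N.lag g) (N.state g) where
  smul_mem_cylinder := N.trace_mul_mem_cylinder g
  tendsto := tendsto_sub_atTop_nat _
  exists_isSubtreeIso {n k n' k'} h := by
    refine ⟨_, _, ?_, isSubtreeIso_of_history_eq (congrArg Prod.fst h),
      isSubtreeIso_of_history_eq (congrArg (fun x => x.2.1) h)⟩
    have hpos : (N.point (n - N.lag g) (g * k))⁻¹ * (g * N.point n k) =
        (N.point (n' - N.lag g) (g * k'))⁻¹ * (g * N.point n' k') :=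
      congrArg (fun x => x.2.2.val) h
    rw [SemiconjBy, ← mul_assoc, mul_inv_eq_iff_eq_mul, mul_assoc, mul_assoc, smul_eq_mul,
      smul_eq_mul, hpos, mul_inv_cancel_left]

theorem exists_injective_monoidHom_isRational (N : HyperbolicNorm G) :
    ∃ φ : G →* ((ℕ → Bool) ≃ₜ (ℕ → Bool)), Injective φ ∧ ∀ g, IsRational (φ g) := by
  have (n : ℕ) : Finite {x : G // N x ≤ n} := (N.finite_ball n).to_subtype
  exact exists_injective_monoidHom_isRational_of_isTransducer N.isSeparated_trace fun g =>
    ⟨_, inferInstance, _, _, N.isTransducer_trace g⟩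

end HyperbolicNorm

section WordNorm

variable {G : Type*} [Group G] {S : Set G}

lemma wordNorm_prod_le {l : List G} (hl : ∀ x ∈ l, x ∈ S ∨ x⁻¹ ∈ S) :
    wordNorm S l.prod ≤ l.length :=
  Nat.sInf_le ⟨l, rfl, hl, rfl⟩

variable (S) in
lemma wordNorm_one : wordNorm S 1 = 0 :=
  Nat.le_zero.1 (wordNorm_prod_le (l := []) (by simp))

lemma exists_list_length_eq_wordNorm (hS : Subgroup.closure S = ⊤) (g : G) :
    ∃ l : List G, l.length = wordNorm S g ∧ (∀ x ∈ l, x ∈ S ∨ x⁻¹ ∈ S) ∧ l.prod = g := by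
  have hg : g ∈ (Subgroup.closure S).toSubmonoid := hS ▸ Subgroup.mem_top g
  rw [Subgroup.closure_toSubmonoid] at hg
  obtain ⟨l, hl, hprod⟩ := Submonoid.exists_list_of_mem_closure hg
  exact Nat.sInf_mem (s := {k | ∃ l : List G, l.length = k ∧ _}) ⟨_, l, rfl, hl, hprod⟩

lemma eq_one_of_wordNorm_eq_zero (hS : Subgroup.closure S = ⊤) {g : G}
    (hg : wordNorm S g = 0) : g = 1 := by
  obtain ⟨l, hlen, -, rfl⟩ := exists_list_length_eq_wordNorm hS g
  rw [List.length_eq_zero_iff.1 (hlen.trans hg), List.prod_nil]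

lemma wordNorm_inv_le (hS : Subgroup.closure S = ⊤) (g : G) : wordNorm S g⁻¹ ≤ wordNorm S g := by
  obtain ⟨l, hlen, hl, rfl⟩ := exists_list_length_eq_wordNorm hS g
  rw [List.prod_inv_reverse, ← hlen]
  refine (wordNorm_prod_le fun x hx => ?_).trans_eq (by simp)
  obtain ⟨y, hy, rfl⟩ := List.mem_map.1 (List.mem_reverse.1 hx)
  rw [inv_inv]
  exact (hl y hy).symm

lemma wordNorm_inv (hS : Subgroup.closure S = ⊤) (g : G) : wordNorm S g⁻¹ = wordNorm S g :=
  (wordNorm_inv_le hS g).antisymm (by simpa only [inv_inv] using wordNorm_inv_le hS g⁻¹)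

lemma wordNorm_mul_le (hS : Subgroup.closure S = ⊤) (g h : G) :
    wordNorm S (g * h) ≤ wordNorm S g + wordNorm S h := by
  obtain ⟨l, hlen, hl, rfl⟩ := exists_list_length_eq_wordNorm hS g
  obtain ⟨l', hlen', hl', rfl⟩ := exists_list_length_eq_wordNorm hS h
  rw [← List.prod_append, ← hlen, ← hlen', ← List.length_append]
  exact wordNorm_prod_le fun x hx => (List.mem_append.1 hx).elim (hl x) (hl' x)

lemma exists_wordNorm_descent (hS : Subgroup.closure S = ⊤) {g : G} (hg : g ≠ 1) :
    ∃ s, wordNorm S s = 1 ∧ wordNorm S (s⁻¹ * g) + 1 = wordNorm S g := by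
  obtain ⟨_ | ⟨s, l⟩, hlen, hl, rfl⟩ := exists_list_length_eq_wordNorm hS g
  · exact absurd List.prod_nil hg
  have hs : wordNorm S s ≤ 1 := by
    simpa using wordNorm_prod_le (l := [s]) (by simpa using hl s List.mem_cons_self)
  have hl' : wordNorm S l.prod ≤ l.length :=
    wordNorm_prod_le fun x hx => hl x (List.mem_cons_of_mem s hx)
  have hmul := wordNorm_mul_le hS s l.prod
  rw [List.length_cons, List.prod_cons] at hlen
  refine ⟨s, by lia, ?_⟩
  rw [List.prod_cons, inv_mul_cancel_left]
  lia

lemma finite_setOf_wordNorm_le (hS : Subgroup.closure S = ⊤) (hfin : S.Finite) (n : ℕ) :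
    {g | wordNorm S g ≤ n}.Finite := by
  have : Finite {x | x ∈ S ∨ x⁻¹ ∈ S} := (hfin.union hfin.inv).to_subtype
  refine ((List.finite_length_le {x | x ∈ S ∨ x⁻¹ ∈ S} n).image
    fun l => (l.map Subtype.val).prod).subset fun g hg => ?_
  obtain ⟨l, hlen, hl, rfl⟩ := exists_list_length_eq_wordNorm hS g
  lift l to List {x | x ∈ S ∨ x⁻¹ ∈ S} using hl
  rw [List.length_map] at hlen
  exact ⟨l, hlen.trans_le hg, rfl⟩

lemma wordDist_comm (hS : Subgroup.closure S = ⊤) (x y : G) : wordDist S x y = wordDist S y x := by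
  rw [wordDist, wordDist, ← wordNorm_inv hS, mul_inv_rev, inv_inv]

lemma wordDist_four_point (hS : Subgroup.closure S = ⊤) {δ : ℝ}
    (hδ : ∀ w x y z : G, min (gromovProd S w x z) (gromovProd S w z y) - δ ≤ gromovProd S w x y)
    (x y z w : G) : wordDist S x y + wordDist S z w ≤
      max (wordDist S x z + wordDist S y w) (wordDist S x w + wordDist S y z) + ⌈2 * δ⌉₊ := by
  have h := hδ w x y z
  have hceil := Nat.le_ceil (2 * δ)
  rw [sub_le_iff_le_add, min_le_iff, gromovProd, gromovProd, gromovProd, wordDist_comm hS z y] at h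
  rw [← Nat.cast_le (α := ℝ), Nat.cast_add, Nat.cast_add, Nat.cast_max, Nat.cast_add, Nat.cast_add,
    ← sub_le_iff_le_add, le_max_iff]
  refine h.imp ?_ ?_ <;> intro h <;> linarith

end WordNorm

/-- The word norm of a hyperbolic group as a hyperbolic norm. Multiplying out the inequality between
Gromov products doubles the hyperbolicity constant. -/
noncomputable def HyperbolicNorm.ofWordNorm {G : Type*} [Group G] {S : Set G}
    (hS : Subgroup.closure S = ⊤) (hfin : S.Finite) {δ : ℝ}
    (hδ : ∀ w x y z : G, min (gromovProd S w x z) (gromovProd S w z y) - δ ≤ gromovProd S w x y) :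
    HyperbolicNorm G where
  toFun := wordNorm S
  δ := ⌈2 * δ⌉₊
  norm_one := wordNorm_one S
  eq_one_of_norm_eq_zero := eq_one_of_wordNorm_eq_zero hS
  norm_inv := wordNorm_inv hS
  norm_mul_le := wordNorm_mul_le hS
  exists_descent := exists_wordNorm_descent hS
  finite_ball := finite_setOf_wordNorm_le hS hfin
  four_point := wordDist_four_point hS hδ

/-!
Belk–Bleak–Matucci (2021): every hyperbolic group embeds in the rational group
`ℛ` of rational homeomorphisms of the Cantor space `ℕ → Bool`.
-/
theorem hyperbolic_embeds_in_rational_group (G : Type*) [Group G]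
    (hG : IsHyperbolic G)
    (R : Subgroup ((ℕ → Bool) ≃ₜ (ℕ → Bool)))
    (hR : ∀ f, f ∈ R ↔ IsRational f) :
    ∃ φ : G →* ↥R, Function.Injective φ := by
  obtain ⟨S, hS, δ, -, hδ⟩ := hG
  obtain ⟨φ, hφ, hrat⟩ :=
    (HyperbolicNorm.ofWordNorm hS S.finite_toSet hδ).exists_injective_monoidHom_isRational
  exact ⟨φ.codRestrict R fun g => (hR _).2 (hrat g),
    (MonoidHom.injective_codRestrict φ R _).2 hφ⟩
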